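/- Define the term families t₁ := λx.λy.y x x, t_{n+1} := λx. t_n (λy. y x x), u₀ := I := λz.z and u_{n+1} := λy. y u_n u_n. For every n > 0, the term t_n I β-reduces to u_n in exactly n β-steps, i.e. t_n I →β^n u_n. -/

import Mathlib

/-! ## Terms of the pure λ-calculus (named syntax) -/

inductive Term : Type
  | var : ℕ → Term
  | lam : ℕ → Term → Term
  | app : Term → Term → Term
  deriving DecidableEq

namespace Term

/-- Size of a term: |x| = 1, |λx.t| = |t|+1, |t u| = |t|+|u|+1. -/
def size : Term → ℕ
  | var _ => 1
  | lam _ t => size t + 1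
  | app t u => size t + size u + 1

/-- Free variables of a term. -/
def fv : Term → Finset ℕ
  | var x => {x}
  | lam x t => (fv t).erase x
  | app t u => fv t ∪ fv u

/-- Meta-level substitution t{x←u}. -/
def subst (x : ℕ) (u : Term) : Term → Term
  | var y => if y = x then u else var y
  | lam y t => if y = x then lam y t else lam y (subst x u t)
  | app t s => app (subst x u t) (subst x u s)

def isVarB : Term → Bool
  | var _ => true
  | _ => false

/-- Values are abstractions (variables are not values). -/
def IsValue (t : Term) : Prop := ∃ x u, t = lam x u

/-- Needed variables of a term. -/
def nv : Term → Finset ℕ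
  | var x => {x}
  | lam _ _ => ∅
  | app t u => nv t ∪ nv u

/-- Applied variables of a term. -/
def anv : Term → Finset ℕ
  | var _ => ∅
  | lam _ _ => ∅
  | app (var x) u => insert x (anv u)
  | app (lam y t) u => anv (lam y t) ∪ anv u
  | app (app t s) u => anv (app t s) ∪ anv u

/-- Unapplied variables of a term. -/
def unv : Term → Finset ℕ
  | var x => {x}
  | lam _ _ => ∅
  | app (var _) u => unv u
  | app (lam y t) u => unv (lam y t) ∪ unv u
  | app (app t s) u => unv (app t s) ∪ unv u

end Term

/-! ## Inert terms and fireballs: i ::= x | i f,  f ::= v | i -/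

mutual
  inductive Term.Inert : Term → Prop
    | var (x : ℕ) : Term.Inert (Term.var x)
    | app {i f : Term} : Term.Inert i → Term.Fireball f → Term.Inert (Term.app i f)
  inductive Term.Fireball : Term → Prop
    | val {x : ℕ} {t : Term} : Term.Fireball (Term.lam x t)
    | inert {i : Term} : Term.Inert i → Term.Fireball i
end

/-- Non-variable inert terms i⁺. -/
def Term.InertPlus (t : Term) : Prop := t.Inert ∧ ∀ x, t ≠ Term.var x

/-! ## β-reduction (closure of the root rule under arbitrary term contexts) -/

inductive Beta : Term → Term → Prop
  | beta (x : ℕ) (t u : Term) : Beta (Term.app (Term.lam x t) u) (Term.subst x u t)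
  | lam {t t' : Term} (x : ℕ) : Beta t t' → Beta (Term.lam x t) (Term.lam x t')
  | appL {t t' : Term} (u : Term) : Beta t t' → Beta (Term.app t u) (Term.app t' u)
  | appR {u u' : Term} (t : Term) : Beta u u' → Beta (Term.app t u) (Term.app t u')

/-- `iterRel R n a b`: an n-step R-reduction sequence from a to b. -/
def iterRel {α : Type} (R : α → α → Prop) : ℕ → α → α → Prop
  | 0 => Eq
  | n + 1 => fun a c => ∃ b, R a b ∧ iterRel R n b c

/-! ## Environments and programs -/

/-- Environments are finite lists of explicit substitutions, written
left-to-right, i.e. E[x←t] is `E ++ [(x, t)]`. -/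
abbrev Env := List (ℕ × Term)

def Env.dom (E : Env) : Finset ℕ := (E.map Prod.fst).toFinset

/-- Content of the leftmost explicit substitution on x. -/
def Env.lookupES : Env → ℕ → Option Term
  | [], _ => none
  | (y, t) :: E, x => if y = x then some t else Env.lookupES E x

structure Program where
  tm : Term
  env : Env

/-- p@[x←u] : appending an explicit substitution at the end of the environment. -/
def Program.appES (p : Program) (x : ℕ) (u : Term) : Program := ⟨p.tm, p.env ++ [(x, u)]⟩

/-- One step of the needed-variables computation along an explicit substitution. -/
def nvStep (V : Finset ℕ) (e : ℕ × Term) : Finset ℕ :=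
  if e.1 ∈ V then (V.erase e.1) ∪ Term.nv e.2 else V

/-- Needed variables of a program. -/
def Program.nv (p : Program) : Finset ℕ := p.env.foldl nvStep p.tm.nv

/-- One step of the applied-variables computation (carrying needed variables). -/
def anvStep : Finset ℕ × Finset ℕ → ℕ × Term → Finset ℕ × Finset ℕ
  | (N, A), (x, u) =>
    (nvStep N (x, u),
      if x ∈ N then
        match u with
        | Term.var y => if x ∈ A then (A.erase x) ∪ {y} else A.erase x
        | _ => (A.erase x) ∪ Term.anv u
      else A)

/-- Applied variables of a program. -/
def Program.anv (p : Program) : Finset ℕ :=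
  (p.env.foldl anvStep (p.tm.nv, p.tm.anv)).2

/-- One step of the unapplied-variables computation (carrying needed variables). -/
def unvStep : Finset ℕ × Finset ℕ → ℕ × Term → Finset ℕ × Finset ℕ
  | (N, U), (x, u) =>
    (nvStep N (x, u),
      if x ∈ U ∨ (x ∈ N ∧ u.isVarB = false) then (U.erase x) ∪ Term.unv u else U)

/-- Unapplied variables of a program. -/
def Program.unv (p : Program) : Finset ℕ :=
  (p.env.foldl unvStep (p.tm.nv, p.tm.unv)).2

/-- Unfolding of a program into a term: unf(t, ε) = t, unf(t, E[x←u]) = unf(t, E){x←u}. -/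
def Program.unf (p : Program) : Term :=
  p.env.foldl (fun s e => Term.subst e.1 e.2 s) p.tm

/-! ## Term contexts H ::= ⟨·⟩ | H t | i H (i inert, enforced by WF) -/

inductive HCtx : Type
  | hole : HCtx
  | appL : HCtx → Term → HCtx
  | appR : Term → HCtx → HCtx

namespace HCtx

/-- Well-formedness: in i H, the left part i must be an inert term. -/
def WF : HCtx → Prop
  | hole => True
  | appL H _ => WF H
  | appR i H => Term.Inert i ∧ WF H

def plug : HCtx → Term → Term
  | hole, t => t
  | appL H u, t => Term.app (plug H t) u
  | appR i H, t => Term.app i (plug H t)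

def nv : HCtx → Finset ℕ
  | hole => ∅
  | appL H _ => nv H
  | appR i H => Term.nv i ∪ nv H

def anv : HCtx → Finset ℕ
  | hole => ∅
  | appL H _ => anv H
  | appR i H => Term.anv i ∪ anv H

def unv : HCtx → Finset ℕ
  | hole => ∅
  | appL H _ => unv H
  | appR i H => Term.unv i ∪ unv H

end HCtx

/-- Applicative term contexts H@ ::= ⟨·⟩ t | H@ t | i H@. -/
inductive HCtx.IsApp : HCtx → Prop
  | base (t : Term) : HCtx.IsApp (HCtx.appL HCtx.hole t)
  | appL {H : HCtx} (t : Term) : HCtx.IsApp H → HCtx.IsApp (HCtx.appL H t)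
  | appR {H : HCtx} {i : Term} : Term.Inert i → HCtx.IsApp H → HCtx.IsApp (HCtx.appR i H)

/-! ## Program contexts: hole in the term part (tc) or inside an ES (ec) -/

inductive PCtx : Type
  | tc : HCtx → Env → PCtx
  | ec : Term → Env → ℕ → HCtx → Env → PCtx

namespace PCtx

/-- P@[x←u] : appending an explicit substitution at the end of the environment of P. -/
def appES : PCtx → ℕ → Term → PCtx
  | tc H E, x, u => tc H (E ++ [(x, u)])
  | ec t E1 y H E2, x, u => ec t E1 y H (E2 ++ [(x, u)])

/-- Plugging a term into a program context. -/
def plugT : PCtx → Term → Program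
  | tc H E, t => ⟨H.plug t, E⟩
  | ec u E1 x H E2, t => ⟨u, E1 ++ (x, H.plug t) :: E2⟩

/-- Plugging a program into a program context: the plugged environment is appended
right after the position of the hole. -/
def plugP : PCtx → Program → Program
  | tc H E, q => ⟨H.plug q.tm, q.env ++ E⟩
  | ec u E1 x H E2, q => ⟨u, E1 ++ (x, H.plug q.tm) :: (q.env ++ E2)⟩

/-- Variables bound by the environment of P. -/
def dom : PCtx → Finset ℕ
  | tc _ E => Env.dom E
  | ec _ E1 y _ E2 => insert y (Env.dom E1 ∪ Env.dom E2)

/-- P(x): content of the leftmost explicit substitution on x occurring after the hole. -/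
def lookup : PCtx → ℕ → Option Term
  | tc _ E, x => Env.lookupES E x
  | ec _ _ _ _ E2, x => Env.lookupES E2 x

/-- (P⟨x⟩)@[x←H] : plug the variable x in the hole of P and append the ES [x←H],
whose content H now contains the hole. -/
def hered (P : PCtx) (x : ℕ) (H : HCtx) : PCtx :=
  ec (P.plugT (Term.var x)).tm (P.plugT (Term.var x)).env x H []

end PCtx

/-! ## Open CbNeed evaluation contexts P ∈ E_V -/

inductive OEC : PCtx → Finset ℕ → Prop
  | ax {H : HCtx} : H.WF → OEC (PCtx.tc H []) H.nv
  | gc {P : PCtx} {V : Finset ℕ} {x : ℕ} (t : Term) :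
      OEC P V → x ∉ V → x ∉ P.dom → OEC (P.appES x t) V
  | inert {P : PCtx} {V : Finset ℕ} {x : ℕ} {i : Term} :
      OEC P V → x ∈ V → Term.Inert i → x ∉ P.dom →
      OEC (P.appES x i) ((V.erase x) ∪ i.nv)
  | her {P : PCtx} {V : Finset ℕ} {x : ℕ} {H : HCtx} :
      OEC P V → x ∉ V → x ∉ P.dom → H.WF →
      OEC (P.hered x H) (V ∪ H.nv)

/-! ## Open CbNeed reduction -/

inductive StepOM : Program → Program → Prop
  | mk {P : PCtx} {V : Finset ℕ} {x : ℕ} {t u : Term} :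
      OEC P V →
      StepOM (P.plugT (Term.app (Term.lam x t) u)) (P.plugP ⟨t, [(x, u)]⟩)

inductive StepOE : Program → Program → Prop
  | mk {P : PCtx} {V : Finset ℕ} {x : ℕ} {v : Term} :
      OEC P V → P.lookup x = some v → v.IsValue →
      StepOE (P.plugT (Term.var x)) (P.plugT v)

def StepOnd (p q : Program) : Prop := StepOM p q ∨ StepOE p q

/-! ## Open CbNeed normal programs -/

inductive PInert : Program → Prop
  | ax {i : Term} : i.Inert → PInert ⟨i, []⟩
  | inert {p : Program} {x : ℕ} {i : Term} :
      PInert p → x ∈ p.nv → i.Inert → PInert (p.appES x i)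
  | gc {p : Program} {x : ℕ} (t : Term) :
      PInert p → x ∉ p.nv → PInert (p.appES x t)

inductive PAbs : Program → Prop
  | ax {v : Term} : v.IsValue → PAbs ⟨v, []⟩
  | gc {p : Program} {x : ℕ} (t : Term) : PAbs p → PAbs (p.appES x t)

def ONorm (p : Program) : Prop := PInert p ∨ PAbs p

/-! ## Useful Open CbNeed: multiplicative and exponential evaluation contexts -/

def upd (S : Finset ℕ) (x y : ℕ) : Finset ℕ := if x ∈ S then (S.erase x) ∪ {y} else S

inductive MEC : PCtx → Finset ℕ → Finset ℕ → Prop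
  | ax {H : HCtx} : H.WF → MEC (PCtx.tc H []) H.unv H.anv
  | var {P : PCtx} {U A : Finset ℕ} {x y : ℕ} :
      MEC P U A → x ∈ U ∪ A → x ∉ P.dom →
      MEC (P.appES x (Term.var y)) (upd U x y) (upd A x y)
  | gc {P : PCtx} {U A : Finset ℕ} {x : ℕ} (t : Term) :
      MEC P U A → x ∉ U ∪ A → x ∉ P.dom → MEC (P.appES x t) U A
  | inert {P : PCtx} {U A : Finset ℕ} {x : ℕ} {i : Term} :
      MEC P U A → x ∈ U ∪ A → i.InertPlus → x ∉ P.dom →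
      MEC (P.appES x i) ((U.erase x) ∪ i.unv) ((A.erase x) ∪ i.anv)
  | val {P : PCtx} {U A : Finset ℕ} {x : ℕ} {v : Term} :
      MEC P U A → x ∈ U → x ∉ A → v.IsValue → x ∉ P.dom →
      MEC (P.appES x v) (U.erase x) A
  | her {P : PCtx} {U A : Finset ℕ} {x : ℕ} {H : HCtx} :
      MEC P U A → x ∉ U ∪ A → x ∉ P.dom → H.WF →
      MEC (P.hered x H) (U ∪ H.unv) (A ∪ H.anv)

/-- Exponential evaluation contexts P ∈ E@_{U,A}; the last (natural number) index
counts the number of applications of rule (e_NA) in the derivation. -/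
inductive EEC : PCtx → Finset ℕ → Finset ℕ → ℕ → Prop
  | ax1 {H : HCtx} : H.IsApp → EEC (PCtx.tc H []) H.unv H.anv 0
  | ax2 {P : PCtx} {U A : Finset ℕ} {x : ℕ} {H : HCtx} :
      MEC P U A → x ∉ U ∪ A → x ∉ P.dom → H.IsApp →
      EEC (P.hered x H) ((U.erase x) ∪ H.unv) (A ∪ H.anv) 0
  | var {P : PCtx} {U A : Finset ℕ} {k : ℕ} {x y : ℕ} :
      EEC P U A k → x ∈ U ∪ A → x ∉ P.dom →
      EEC (P.appES x (Term.var y)) (upd U x y) (upd A x y) k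
  | inert {P : PCtx} {U A : Finset ℕ} {k : ℕ} {x : ℕ} {i : Term} :
      EEC P U A k → x ∈ U ∪ A → i.InertPlus → x ∉ P.dom →
      EEC (P.appES x i) ((U.erase x) ∪ i.unv) ((A.erase x) ∪ i.anv) k
  | gc {P : PCtx} {U A : Finset ℕ} {k : ℕ} {x : ℕ} (t : Term) :
      EEC P U A k → x ∉ U ∪ A → x ∉ P.dom → EEC (P.appES x t) U A k
  | val {P : PCtx} {U A : Finset ℕ} {k : ℕ} {x : ℕ} {v : Term} :
      EEC P U A k → x ∈ U → x ∉ A → v.IsValue → x ∉ P.dom →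
      EEC (P.appES x v) (U.erase x) A k
  | na {P : PCtx} {U A : Finset ℕ} {k : ℕ} {x : ℕ} :
      EEC P U A k → x ∉ A → x ∉ P.dom →
      EEC (P.hered x HCtx.hole) (U.erase x) A (k + 1)

/-! ## Useful Open CbNeed reduction -/

inductive StepUM : Program → Program → Prop
  | mk {P : PCtx} {U A : Finset ℕ} {x : ℕ} {t u : Term} :
      MEC P U A →
      StepUM (P.plugT (Term.app (Term.lam x t) u)) (P.plugP ⟨t, [(x, u)]⟩)

inductive StepUE : Program → Program → Prop
  | mk {P : PCtx} {U A : Finset ℕ} {k : ℕ} {x : ℕ} {v : Term} :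
      EEC P U A k → P.lookup x = some v → v.IsValue →
      StepUE (P.plugT (Term.var x)) (P.plugT v)

def StepUnd (p q : Program) : Prop := StepUM p q ∨ StepUE p q

/-- Useful multiplicative steps whose evaluation context lies in Em_{U,A}. -/
def StepUMat (U A : Finset ℕ) (p q : Program) : Prop :=
  ∃ (P : PCtx) (x : ℕ) (t u : Term), MEC P U A ∧
    p = P.plugT (Term.app (Term.lam x t) u) ∧ q = P.plugP ⟨t, [(x, u)]⟩

/-- Useful exponential steps whose evaluation context lies in E@_{U,A}. -/
def StepUEat (U A : Finset ℕ) (p q : Program) : Prop :=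
  ∃ (P : PCtx) (k : ℕ) (x : ℕ) (v : Term), EEC P U A k ∧
    P.lookup x = some v ∧ v.IsValue ∧
    p = P.plugT (Term.var x) ∧ q = P.plugT v

/-! ## Useful normal-form predicates -/

inductive GenVar : ℕ → Program → Prop
  | ax (x : ℕ) : GenVar x ⟨Term.var x, []⟩
  | her {x : ℕ} {p : Program} (y : ℕ) : GenVar x p → GenVar y (p.appES x (Term.var y))
  | gc {x z : ℕ} {p : Program} (t : Term) : GenVar x p → z ≠ x → GenVar x (p.appES z t)

inductive UfAbs : Program → Prop
  | ax {v : Term} : v.IsValue → UfAbs ⟨v, []⟩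
  | gv {p : Program} {x : ℕ} {v : Term} : GenVar x p → v.IsValue → UfAbs (p.appES x v)
  | gc {p : Program} {x : ℕ} (t : Term) : UfAbs p → UfAbs (p.appES x t)

inductive UfInert : Program → Prop
  | ax {i : Term} : i.InertPlus → UfInert ⟨i, []⟩
  | gv {p : Program} {x : ℕ} {i : Term} : GenVar x p → i.InertPlus → UfInert (p.appES x i)
  | inert {p : Program} {x : ℕ} {i : Term} :
      UfInert p → x ∈ p.nv → i.Inert → UfInert (p.appES x i)
  | useless {p : Program} {x : ℕ} {v : Term} :
      UfInert p → x ∈ p.unv → x ∉ p.anv → v.IsValue → UfInert (p.appES x v)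
  | gc {p : Program} {x : ℕ} (t : Term) : UfInert p → x ∉ p.nv → UfInert (p.appES x t)

def UfNorm (p : Program) : Prop := UfInert p ∨ UfAbs p ∨ ∃ x, GenVar x p

/-! ## The size-exploding family -/

/-- t₁ := λx.λy. y x x  (x := 0, y := 1). -/
def t1 : Term := Term.lam 0 (Term.lam 1 (Term.app (Term.app (Term.var 1) (Term.var 0)) (Term.var 0)))

/-- λy. y x x. -/
def tbody : Term := Term.lam 1 (Term.app (Term.app (Term.var 1) (Term.var 0)) (Term.var 0))

/-- The family t_n (values for n ≥ 1; tfam 0 is a dummy). -/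
def tfam : ℕ → Term
  | 0 => t1
  | 1 => t1
  | n + 2 => Term.lam 0 (Term.app (tfam (n + 1)) tbody)

/-- I := λz.z. -/
def Idt : Term := Term.lam 2 (Term.var 2)

/-- The family u_n : u₀ = I, u_{n+1} = λy. y u_n u_n. -/
def ufam : ℕ → Term
  | 0 => Idt
  | n + 1 => Term.lam 1 (Term.app (Term.app (Term.var 1) (ufam n)) (ufam n))

/-!
For every `u`, firing the root redex of `t_1 u` yields `λy. y u u`, and firing that of `t_{n+1} u`
with `n > 0` yields `t_n (λy. y u u)`, since `t_n` is closed and hence left alone by the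
substitution. So `t_n u` reaches the `n`-th iterate of `u ↦ λy. y u u` in `n` root steps, and `u_n`
is this iterate at `u = I`. The argument `u` has to vary in the induction.
-/

/-- The map `u ↦ λy. y u u` that each step of `t_n u` applies to its argument, with `y := 1`. Since
`Term.subst` does not rename binders, a variable `1` free in `u` is captured here just as it is
when `u` is substituted into `tbody`; no capture occurs for the closed terms `u_n`. -/
def dup (u : Term) : Term := Term.lam 1 (Term.app (Term.app (Term.var 1) u) u)

theorem ufam_eq_iterate_dup (n : ℕ) : ufam n = dup^[n] Idt := by
  induction n with
  | zero => rfl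
  | succ n ih => rw [Function.iterate_succ_apply', ← ih]; rfl

theorem Term.subst_of_notMem_fv {x : ℕ} {t : Term} (u : Term) (hx : x ∉ t.fv) :
    Term.subst x u t = t := by
  induction t with
  | var y => simp_all [Term.subst, Term.fv, eq_comm]
  | lam y t ih => grind [Term.subst, Term.fv]
  | app t s iht ihs => simp_all [Term.subst, Term.fv]

theorem fv_tfam (n : ℕ) : (tfam n).fv = ∅ := by
  induction n using tfam.induct with
  | case1 => rfl
  | case2 => rfl
  | case3 n ih =>
    have fv_tbody : tbody.fv = {0} := rfl
    simp [tfam, Term.fv, ih, fv_tbody]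

theorem beta_tfam_one_app (u : Term) : Beta (Term.app (tfam 1) u) (dup u) :=
  Beta.beta 0 tbody u

theorem beta_tfam_succ_succ_app (n : ℕ) (u : Term) :
    Beta (Term.app (tfam (n + 2)) u) (Term.app (tfam (n + 1)) (dup u)) := by
  have contractum : Term.subst 0 u (Term.app (tfam (n + 1)) tbody) =
      Term.app (tfam (n + 1)) (dup u) :=
    congrArg (Term.app · (dup u)) (Term.subst_of_notMem_fv u (by simp [fv_tfam]))
  rw [← contractum]
  exact Beta.beta 0 _ u

theorem iterRel_beta_tfam_succ_app (n : ℕ) (u : Term) :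
    iterRel Beta (n + 1) (Term.app (tfam (n + 1)) u) (dup^[n + 1] u) := by
  induction n generalizing u with
  | zero => exact ⟨dup u, beta_tfam_one_app u, rfl⟩
  | succ n ih => exact ⟨_, beta_tfam_succ_succ_app n u, ih (dup u)⟩

/-- For every n > 0, t_n I β-reduces to u_n in exactly n β-steps. -/
theorem size_explosion_reduction :
    ∀ n : ℕ, 0 < n → iterRel Beta n (Term.app (tfam n) Idt) (ufam n) := by
  intro n hn
  obtain ⟨m, rfl⟩ := Nat.exists_eq_add_one.mpr hn
  rw [ufam_eq_iterate_dup]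
  exact iterRel_beta_tfam_succ_app m Idt
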